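/- Let d ≥ 1, let x, y ∈ ℝ^d with x ≠ y, let q₀ : [0, ∞) → [0, ∞) be Borel measurable, and set m(z) := min(q₀(|z|), q₀(|z + x − y|)) for z ∈ ℝ^d. Assume ∫_{{z : |z| ≤ 1 + |x−y|}} m(z) dz < ∞ (Lebesgue measure). Then ∫_{ℝ^d} (⟨x−y, z + (x−y)⟩/|x−y|)·1_{(0,1)}(|z + (x−y)|)·m(z) dz = ∫_{ℝ^d} (⟨x−y, R_{x,y}(z)⟩/|x−y|)·1_{(0,1)}(|z|)·m(z) dz. -/

import Mathlib

open MeasureTheory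
open scoped RealInnerProductSpace

/-- The reflection `R_{x,y}(z) = z - (2⟨x-y,z⟩/|x-y|²)(x-y)`. -/
noncomputable def reflect {d : ℕ} (x y z : EuclideanSpace ℝ (Fin d)) :
    EuclideanSpace ℝ (Fin d) :=
  z - (2 * ⟪x - y, z⟫ / ‖x - y‖ ^ 2) • (x - y)

/-- The indicator function `1_{(0,1)}`. -/
noncomputable def ind01 (t : ℝ) : ℝ := Set.indicator (Set.Ioo (0 : ℝ) 1) (fun _ => (1 : ℝ)) t

/-!
Write `u = x - y`. The substitution `z ↦ -u - z` preserves Lebesgue measure, exchanges `‖z‖` with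
`‖z + u‖`, hence fixes `m`, and turns `z + u` into `-z`. Finally `-z` may be replaced by the
reflection of `z`, because the two have the same component along `u`.
-/

section GroupIntegral

variable {A G : Type*} [AddCommGroup A] [MeasurableSpace A] [MeasurableAdd A] [MeasurableNeg A]
  [NormedAddCommGroup G] [NormedSpace ℝ G]

theorem integral_smul_comp_add_right_eq_integral_smul_comp_neg
    (μ : Measure A) [μ.IsAddLeftInvariant] [μ.IsNegInvariant] {u : A} {m : A → ℝ}
    (hm : ∀ z, m (-u - z) = m z) (f : A → G) :
    ∫ z, m z • f (z + u) ∂μ = ∫ z, m z • f (-z) ∂μ := by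
  calc
    ∫ z, m z • f (z + u) ∂μ = ∫ z, m (-u - z) • f (-u - z + u) ∂μ :=
      (integral_sub_left_eq_self (fun z => m z • f (z + u)) μ (-u)).symm
    _ = ∫ z, m z • f (-z) ∂μ := by
      simp only [hm, sub_add_eq_add_sub, neg_add_cancel, zero_sub]

end GroupIntegral

section Reflection

variable {E : Type*} [NormedAddCommGroup E] [InnerProductSpace ℝ E]

theorem inner_reflection_orthogonal_span_singleton (u z : E) :
    ⟪u, (ℝ ∙ u)ᗮ.reflection z⟫ = ⟪u, -z⟫ := by
  rw [← (ℝ ∙ u)ᗮ.reflection.inner_map_map, Submodule.reflection_reflection,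
    Submodule.reflection_orthogonalComplement_singleton_eq_neg, inner_neg_left, inner_neg_right]

theorem reflect_eq_reflection {d : ℕ} (x y z : EuclideanSpace ℝ (Fin d)) :
    reflect x y z = (ℝ ∙ (x - y))ᗮ.reflection z := by
  rw [Submodule.reflection_orthogonal_apply, Submodule.reflection_singleton_apply, reflect]
  simp only [RCLike.ofReal_real_eq_id, id_eq]
  module

theorem stmt_16_general [MeasurableSpace E] [MeasurableAdd E] [MeasurableNeg E]
    (μ : Measure E) [μ.IsAddLeftInvariant] [μ.IsNegInvariant]
    {G : Type*} [NormedAddCommGroup G] [NormedSpace ℝ G]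
    (u : E) (w : ℝ → ℝ → ℝ) (hw : ∀ r s, w r s = w s r) (φ : ℝ → ℝ → G) :
    ∫ z, w ‖z‖ ‖z + u‖ • φ ⟪u, z + u⟫ ‖z + u‖ ∂μ
      = ∫ z, w ‖z‖ ‖z + u‖ • φ ⟪u, (ℝ ∙ u)ᗮ.reflection z⟫ ‖z‖ ∂μ := by
  have weight_invariant (z : E) : w ‖-u - z‖ ‖-u - z + u‖ = w ‖z‖ ‖z + u‖ := by
    rw [sub_add_eq_add_sub, neg_add_cancel, zero_sub, norm_neg, ← neg_add', norm_neg,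
      add_comm u z, hw]
  simpa only [inner_reflection_orthogonal_span_singleton, norm_neg] using
    integral_smul_comp_add_right_eq_integral_smul_comp_neg μ weight_invariant
      (fun v => φ ⟪u, v⟫ ‖v‖)

end Reflection

/-- The change-of-variables identity used for the combined reflection/basic coupling:
with `m(z) = min(q₀(|z|), q₀(|z+x-y|))` integrable on `{|z| ≤ 1 + |x-y|}`,
`∫ ⟨x-y, z+(x-y)⟩/|x-y| · 1_{(0,1)}(|z+(x-y)|) m(z) dz
  = ∫ ⟨x-y, R_{x,y}(z)⟩/|x-y| · 1_{(0,1)}(|z|) m(z) dz`. -/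
theorem stmt_16 {d : ℕ} (hd : 1 ≤ d)
    (x y : EuclideanSpace ℝ (Fin d)) (hxy : x ≠ y)
    (q₀ : ℝ → ℝ) (hq : Measurable q₀) (hq0 : ∀ t : ℝ, 0 ≤ t → 0 ≤ q₀ t)
    (hint : IntegrableOn (fun z => min (q₀ ‖z‖) (q₀ ‖z + x - y‖))
      {z | ‖z‖ ≤ 1 + ‖x - y‖} volume) :
    ∫ z, (⟪x - y, z + (x - y)⟫ / ‖x - y‖) * ind01 ‖z + (x - y)‖
        * min (q₀ ‖z‖) (q₀ ‖z + x - y‖)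
      = ∫ z, (⟪x - y, reflect x y z⟫ / ‖x - y‖) * ind01 ‖z‖
        * min (q₀ ‖z‖) (q₀ ‖z + x - y‖) := by
  simpa only [smul_eq_mul, reflect_eq_reflection, add_sub_assoc, mul_comm] using
    stmt_16_general volume (x - y) (fun r s => min (q₀ r) (q₀ s)) (fun _ _ => min_comm _ _)
      (fun t r => t / ‖x - y‖ * ind01 r)
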